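/- Let G be a connected graph. If Π is a resolving partition for G⊙K_n of cardinality n+1, then for every vertex v of G⊙K_n and every set A ∈ Π, the distance d(v,A) is at most 3. -/

import Mathlib

/-!
Write `C = G ⊙ K_n`. A shortest path leaving the copy of `K_n` at `i` passes through the vertex `i`
of `G`, so all vertices of a copy have the same distance to a cell that the copy misses. Two of them
in one cell would also be at distance `1` from every other cell that the copy meets; hence a
resolving partition separates them. With `n + 1` cells, a copy that misses a cell `A` therefore
meets every other cell.

Suppose `d(i, A) ≥ 3` for a vertex `i` of `G`, and let `j` be the neighbour of `i` on a geodesic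
towards `A`. Since `d(j, A) ≥ 2`, the copies at `i` and at `j` both miss `A`, hence meet all other
cells. Let `B` be the cell of `i` and `x` the vertex of the copy at `j` lying in `B`. Both `i` and
`x` have distance `0` to `B`, distance `1` to every cell other than `A` and `B`, and
`d(x, A) = d(j, A) + 1 = d(i, A)`; this contradicts resolvability. So `d(i, A) ≤ 2` for all `i`,
and each vertex of the copy at `i` is adjacent to `i`.
-/

open SimpleGraph

/-- The corona product `G ⊙ H`: one copy of `G`, one copy of `H` for each vertex of `G`,
with the `i`-th vertex of `G` joined to every vertex of the `i`-th copy of `H`. -/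
def corona {α β : Type*} (G : SimpleGraph α) (H : SimpleGraph β) :
    SimpleGraph (α ⊕ α × β) :=
  SimpleGraph.fromRel (fun x y =>
    match x, y with
    | Sum.inl a, Sum.inl b => G.Adj a b
    | Sum.inl a, Sum.inr iu => a = iu.1
    | Sum.inr iu, Sum.inr jw => iu.1 = jw.1 ∧ H.Adj iu.2 jw.2
    | _, _ => False)

/-- The distance from a vertex to a set of vertices: `d(v,A) = min_{u ∈ A} d(v,u)`. -/
noncomputable def setDist {α : Type*} (G : SimpleGraph α) (v : α) (A : Set α) : ℕ :=
  sInf (G.dist v '' A)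

/-- `S` is a resolving set for `G`: distinct vertices have distinct metric representations. -/
def IsResolvingSet {α : Type*} (G : SimpleGraph α) (S : Set α) : Prop :=
  ∀ u v : α, (∀ w ∈ S, G.dist u w = G.dist v w) → u = v

/-- The metric dimension of `G`: minimum cardinality of a resolving set. -/
noncomputable def metricDim {α : Type*} (G : SimpleGraph α) : ℕ :=
  sInf {k | ∃ S : Set α, IsResolvingSet G S ∧ S.ncard = k}

/-- A family of sets is a resolving partition for `G` if it is a partition of the vertex set
into nonempty cells and distinct vertices have distinct partition representations. -/
def IsResolvingPartition {α : Type*} (G : SimpleGraph α) (P : Set (Set α)) : Prop :=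
  (∀ A ∈ P, A.Nonempty) ∧ (∀ v : α, ∃! A : Set α, A ∈ P ∧ v ∈ A) ∧
    ∀ u v : α, (∀ A ∈ P, setDist G u A = setDist G v A) → u = v

/-- The partition dimension of `G`: minimum number of cells in a resolving partition. -/
noncomputable def partitionDim {α : Type*} (G : SimpleGraph α) : ℕ :=
  sInf {t | ∃ P : Set (Set α), IsResolvingPartition G P ∧ P.ncard = t}

/-- `c(H)`: the maximum cardinality of a connected component of `H` which is isomorphic to a
complete graph (i.e. whose vertex set is a clique). -/
noncomputable def maxCompleteComp {β : Type*} (H : SimpleGraph β) : ℕ :=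
  sSup {k | ∃ C : H.ConnectedComponent, H.IsClique C.supp ∧ C.supp.ncard = k}

/-- `β(H)`: the number of isolated vertices of `H`. -/
noncomputable def numIsolated {β : Type*} (H : SimpleGraph β) : ℕ :=
  Set.ncard {v : β | ∀ u, ¬ H.Adj v u}

/-- `α(H)`: the number of connected components of `H` of order greater than one. -/
noncomputable def numBigComp {β : Type*} (H : SimpleGraph β) : ℕ :=
  Set.ncard {C : H.ConnectedComponent | 1 < C.supp.ncard}

section setDist

variable {α : Type*} {G : SimpleGraph α} {v w : α} {A : Set α}

lemma setDist_le_dist (hw : w ∈ A) : setDist G v A ≤ G.dist v w :=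
  Nat.sInf_le ⟨w, hw, rfl⟩

lemma exists_mem_dist_eq_setDist (G : SimpleGraph α) (hA : A.Nonempty) (v : α) :
    ∃ a ∈ A, G.dist v a = setDist G v A :=
  Nat.sInf_mem (hA.image (G.dist v))

lemma setDist_eq_zero_of_mem (hv : v ∈ A) : setDist G v A = 0 :=
  Nat.le_zero.1 ((setDist_le_dist hv).trans_eq dist_self)

lemma setDist_pos_of_notMem (hG : G.Connected) (hA : A.Nonempty) (hv : v ∉ A) :
    0 < setDist G v A := by
  obtain ⟨a, ha, hdist⟩ := exists_mem_dist_eq_setDist G hA v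
  exact hdist ▸ hG.pos_dist_of_ne (ne_of_mem_of_not_mem ha hv).symm

lemma setDist_le_setDist_add_one_of_adj (hG : G.Connected) (hA : A.Nonempty) (h : G.Adj v w) :
    setDist G v A ≤ setDist G w A + 1 := by
  obtain ⟨a, ha, hdist⟩ := exists_mem_dist_eq_setDist G hA w
  calc
    setDist G v A ≤ G.dist v a := setDist_le_dist ha
    _ ≤ G.dist v w + G.dist w a := hG.dist_triangle
    _ = setDist G w A + 1 := by rw [dist_eq_one_iff_adj.2 h, hdist, add_comm]

lemma setDist_eq_one_of_adj_of_mem (hG : G.Connected) (hv : v ∉ A) (hw : w ∈ A)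
    (h : G.Adj v w) : setDist G v A = 1 :=
  le_antisymm ((setDist_le_dist hw).trans_eq (dist_eq_one_iff_adj.2 h))
    (setDist_pos_of_notMem hG ⟨w, hw⟩ hv)

lemma exists_adj_setDist_eq_add_one (hG : G.Connected) (hA : A.Nonempty) (hv : v ∉ A) :
    ∃ w, G.Adj v w ∧ setDist G v A = setDist G w A + 1 := by
  obtain ⟨a, ha, hdist⟩ := exists_mem_dist_eq_setDist G hA v
  obtain ⟨p, hp⟩ := hG.exists_walk_length_eq_dist v a
  cases p with
  | nil => exact absurd ha hv
  | @cons _ w _ h q =>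
    refine ⟨w, h, le_antisymm (setDist_le_setDist_add_one_of_adj hG hA h) ?_⟩
    calc
      setDist G w A + 1 ≤ q.length + 1 := by grw [setDist_le_dist ha, dist_le q]
      _ = setDist G v A := by rw [← hdist, ← hp, Walk.length_cons]

end setDist

section corona

variable {V β : Type*} {G : SimpleGraph V} {H : SimpleGraph β} {i j : V} {u w : β}
  {A : Set (V ⊕ V × β)}

lemma corona_adj_inl_inl : (corona G H).Adj (.inl i) (.inl j) ↔ G.Adj i j := by
  simpa [corona, G.adj_comm j i] using Adj.ne

lemma corona_adj_inl_inr : (corona G H).Adj (.inl i) (.inr (j, u)) ↔ i = j := by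
  simp [corona]

lemma corona_adj_inr_inr :
    (corona G H).Adj (.inr (i, u)) (.inr (j, w)) ↔ i = j ∧ H.Adj u w := by
  simp only [corona, fromRel_adj, H.adj_comm w u, eq_comm (a := j), or_self]
  exact and_iff_right_of_imp fun h heq => h.2.ne (congrArg Prod.snd (Sum.inr_injective heq))

lemma corona_connected (hG : G.Connected) : (corona G H).Connected := by
  obtain ⟨r⟩ := hG.nonempty
  let inlHom : G →g corona G H := ⟨Sum.inl, corona_adj_inl_inl.2⟩
  have reachable_inl (i : V) : (corona G H).Reachable (.inl r) (.inl i) :=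
    (hG.preconnected r i).map inlHom
  refine (connected_iff_exists_forall_reachable _).2 ⟨.inl r, ?_⟩
  rintro (i | ⟨i, u⟩)
  · exact reachable_inl i
  · exact (reachable_inl i).trans (corona_adj_inl_inr.2 rfl).reachable

lemma setDist_corona_inl_lt_inr (hG : G.Connected) (hA : A.Nonempty)
    (hi : ∀ u, .inr (i, u) ∉ A) (u : β) :
    setDist (corona G H) (.inl i) A < setDist (corona G H) (.inr (i, u)) A := by
  induction hd : setDist (corona G H) (.inr (i, u)) A using Nat.strong_induction_on
    generalizing u with
  | h d ih =>
    have hC : (corona G H).Connected := corona_connected hG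
    obtain ⟨j | ⟨j, w⟩, hadj, hy⟩ := exists_adj_setDist_eq_add_one hC hA (hi u)
    · obtain rfl := corona_adj_inl_inr.1 hadj.symm
      omega
    · obtain ⟨rfl, -⟩ := corona_adj_inr_inr.1 hadj
      have := ih _ (by omega) w rfl
      omega

lemma setDist_corona_inr_le (hG : G.Connected) (hA : A.Nonempty) (i : V) (u : β) :
    setDist (corona G H) (.inr (i, u)) A ≤ setDist (corona G H) (.inl i) A + 1 :=
  setDist_le_setDist_add_one_of_adj (corona_connected hG) hA (corona_adj_inl_inr.2 rfl).symm

lemma setDist_corona_inr_of_forall_notMem (hG : G.Connected) (hA : A.Nonempty)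
    (hi : ∀ u, .inr (i, u) ∉ A) (u : β) :
    setDist (corona G H) (.inr (i, u)) A = setDist (corona G H) (.inl i) A + 1 :=
  le_antisymm (setDist_corona_inr_le hG hA i u) (setDist_corona_inl_lt_inr hG hA hi u)

lemma inr_notMem_of_one_lt_setDist_corona_inl (hi : 1 < setDist (corona G H) (.inl i) A)
    (u : β) : .inr (i, u) ∉ A := fun hu =>
  hi.not_ge ((setDist_le_dist hu).trans_eq (dist_eq_one_iff_adj.2 (corona_adj_inl_inr.2 rfl)))

lemma exists_adj_setDist_corona_inl_eq_add_one (hG : G.Connected) (hA : A.Nonempty)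
    (hi : 1 < setDist (corona G H) (.inl i) A) :
    ∃ j, G.Adj i j ∧
      setDist (corona G H) (.inl i) A = setDist (corona G H) (.inl j) A + 1 := by
  have hiA : .inl i ∉ A := fun h => by simp [setDist_eq_zero_of_mem h] at hi
  have hC : (corona G H).Connected := corona_connected hG
  obtain ⟨j | ⟨j, w⟩, hadj, hy⟩ := exists_adj_setDist_eq_add_one hC hA hiA
  · exact ⟨j, corona_adj_inl_inl.1 hadj, hy⟩
  · obtain rfl := corona_adj_inl_inr.1 hadj
    have := setDist_corona_inl_lt_inr (H := H) hG hA
      (inr_notMem_of_one_lt_setDist_corona_inl hi) w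
    omega

end corona

lemma exists_apply_mem_of_ncard_eq {α β : Type*} [Fintype β] {P : Set (Set α)} {f : β → α}
    (hcover : ∀ u, ∃ B ∈ P, f u ∈ B)
    (hinj : ∀ B ∈ P, ∀ u w, f u ∈ B → f w ∈ B → u = w)
    (hcard : P.ncard = Fintype.card β + 1) {A B : Set α} (hA : A ∈ P) (hmiss : ∀ u, f u ∉ A)
    (hB : B ∈ P) (hBA : B ≠ A) : ∃ u, f u ∈ B := by
  choose cell hcell hmem using hcover
  have cell_injective : Function.Injective cell := fun u w h =>
    hinj _ (hcell u) u w (hmem u) (h ▸ hmem w)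
  have range_subset : Set.range cell ⊆ P \ {A} := by
    rintro _ ⟨u, rfl⟩
    exact ⟨hcell u, fun h => hmiss u (h ▸ hmem u)⟩
  have ncard_range : (Set.range cell).ncard = Fintype.card β := by
    rw [← Set.image_univ, Set.ncard_image_of_injective _ cell_injective, Set.ncard_univ,
      Nat.card_eq_fintype_card]
  have ncard_diff : (P \ {A}).ncard = Fintype.card β := by
    rw [Set.ncard_sdiff_singleton_of_mem hA, hcard, Nat.add_sub_cancel]
  have hfin : (P \ {A}).Finite := (Set.finite_of_ncard_ne_zero (by omega)).sdiff
  have range_eq : Set.range cell = P \ {A} :=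
    Set.eq_of_subset_of_ncard_le range_subset (ncard_diff.trans ncard_range.symm).le hfin
  obtain ⟨u, rfl⟩ : B ∈ Set.range cell := range_eq ▸ ⟨hB, hBA⟩
  exact ⟨u, hmem u⟩

namespace IsResolvingPartition

section Cells

variable {α : Type*} {G : SimpleGraph α} {P : Set (Set α)} {A B : Set α} {v w : α}

lemma nonempty (hP : IsResolvingPartition G P) (hA : A ∈ P) : A.Nonempty :=
  hP.1 A hA

lemma exists_mem (hP : IsResolvingPartition G P) (v : α) : ∃ B ∈ P, v ∈ B :=
  (hP.2.1 v).exists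

lemma notMem_of_ne (hP : IsResolvingPartition G P) (hA : A ∈ P) (hB : B ∈ P) (hAB : A ≠ B)
    (hv : v ∈ B) : v ∉ A :=
  fun h => hAB ((hP.2.1 v).unique ⟨hA, h⟩ ⟨hB, hv⟩)

lemma eq_of_mem_of_forall_setDist_eq (hP : IsResolvingPartition G P) (hB : B ∈ P) (hv : v ∈ B)
    (hw : w ∈ B) (h : ∀ D ∈ P, v ∉ D → w ∉ D → setDist G v D = setDist G w D) : v = w := by
  refine hP.2.2 v w fun D hD => ?_
  rcases eq_or_ne D B with rfl | hDB
  · rw [setDist_eq_zero_of_mem hv, setDist_eq_zero_of_mem hw]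
  · exact h D hD (hP.notMem_of_ne hD hB hDB hv) (hP.notMem_of_ne hD hB hDB hw)

end Cells

section Corona

variable {V β : Type*} {G : SimpleGraph V} {i : V} {u w : β} {P : Set (Set (V ⊕ V × β))}
  {A B : Set (V ⊕ V × β)}

lemma eq_of_inr_mem (hP : IsResolvingPartition (corona G ⊤) P) (hG : G.Connected) (hB : B ∈ P)
    (hu : .inr (i, u) ∈ B) (hw : .inr (i, w) ∈ B) : u = w := by
  have hC : (corona G (⊤ : SimpleGraph β)).Connected := corona_connected hG
  suffices h : (.inr (i, u) : V ⊕ V × β) = .inr (i, w) from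
    congrArg Prod.snd (Sum.inr_injective h)
  refine hP.eq_of_mem_of_forall_setDist_eq hB hu hw fun D hD huD hwD => ?_
  by_cases hmeet : ∃ t, .inr (i, t) ∈ D
  · obtain ⟨t, ht⟩ := hmeet
    have adj_of_notMem {s : β} (hs : .inr (i, s) ∉ D) :
        (corona G ⊤).Adj (.inr (i, s)) (.inr (i, t)) :=
      corona_adj_inr_inr.2 ⟨rfl, fun hst => hs (hst ▸ ht)⟩
    rw [setDist_eq_one_of_adj_of_mem hC huD ht (adj_of_notMem huD),
      setDist_eq_one_of_adj_of_mem hC hwD ht (adj_of_notMem hwD)]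
  · have hmiss := not_exists.1 hmeet
    rw [setDist_corona_inr_of_forall_notMem hG (hP.nonempty hD) hmiss,
      setDist_corona_inr_of_forall_notMem hG (hP.nonempty hD) hmiss]

variable [Fintype β]

lemma exists_inr_mem (hP : IsResolvingPartition (corona G ⊤) P) (hG : G.Connected)
    (hcard : P.ncard = Fintype.card β + 1) (hA : A ∈ P) (hi : ∀ u, .inr (i, u) ∉ A)
    (hB : B ∈ P) (hBA : B ≠ A) : ∃ u, .inr (i, u) ∈ B :=
  exists_apply_mem_of_ncard_eq (f := fun u => .inr (i, u)) (fun _ => hP.exists_mem _)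
    (fun _ hD _ _ => hP.eq_of_inr_mem hG hD) hcard hA hi hB hBA

lemma setDist_inl_eq_one (hP : IsResolvingPartition (corona G ⊤) P) (hG : G.Connected)
    (hcard : P.ncard = Fintype.card β + 1) (hA : A ∈ P) (hi : ∀ u, .inr (i, u) ∉ A)
    (hB : B ∈ P) (hBA : B ≠ A) (hiB : .inl i ∉ B) : setDist (corona G ⊤) (.inl i) B = 1 := by
  obtain ⟨t, ht⟩ := hP.exists_inr_mem hG hcard hA hi hB hBA
  exact setDist_eq_one_of_adj_of_mem (corona_connected hG) hiB ht (corona_adj_inl_inr.2 rfl)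

lemma setDist_inr_eq_one (hP : IsResolvingPartition (corona G ⊤) P) (hG : G.Connected)
    (hcard : P.ncard = Fintype.card β + 1) (hA : A ∈ P) (hi : ∀ u, .inr (i, u) ∉ A)
    (hB : B ∈ P) (hBA : B ≠ A) (huB : .inr (i, u) ∉ B) :
    setDist (corona G ⊤) (.inr (i, u)) B = 1 := by
  obtain ⟨t, ht⟩ := hP.exists_inr_mem hG hcard hA hi hB hBA
  have hut : u ≠ t := fun h => huB (h ▸ ht)
  exact setDist_eq_one_of_adj_of_mem (corona_connected hG) huB ht
    (corona_adj_inr_inr.2 ⟨rfl, hut⟩)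

lemma setDist_inl_le_two (hP : IsResolvingPartition (corona G ⊤) P) (hG : G.Connected)
    (hcard : P.ncard = Fintype.card β + 1) (hA : A ∈ P) (i : V) :
    setDist (corona G ⊤) (.inl i) A ≤ 2 := by
  by_contra! hfar
  have one_lt_i := one_lt_two.trans hfar
  obtain ⟨j, -, hij⟩ := exists_adj_setDist_corona_inl_eq_add_one hG (hP.nonempty hA) one_lt_i
  have one_lt_j : 1 < setDist (corona G ⊤) (.inl j) A := by omega
  have hi := inr_notMem_of_one_lt_setDist_corona_inl one_lt_i
  have hj := inr_notMem_of_one_lt_setDist_corona_inl one_lt_j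
  obtain ⟨B, hB, hiB⟩ := hP.exists_mem (.inl i)
  have hBA : B ≠ A := by
    rintro rfl
    simp [setDist_eq_zero_of_mem hiB] at hfar
  obtain ⟨x, hx⟩ := hP.exists_inr_mem hG hcard hA hj hB hBA
  refine Sum.inl_ne_inr (hP.eq_of_mem_of_forall_setDist_eq hB hiB hx fun D hD hiD hxD => ?_)
  rcases eq_or_ne D A with rfl | hDA
  · rw [setDist_corona_inr_of_forall_notMem hG (hP.nonempty hD) hj, hij]
  · rw [hP.setDist_inl_eq_one hG hcard hA hi hD hDA hiD,
      hP.setDist_inr_eq_one hG hcard hA hj hD hDA hxD]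

end Corona

end IsResolvingPartition

theorem stmt8_general {V β : Type*} [Fintype β] (G : SimpleGraph V) (hG : G.Connected)
    (Part : Set (Set (V ⊕ V × β)))
    (hPart : IsResolvingPartition (corona G (⊤ : SimpleGraph β)) Part)
    (hcard : Part.ncard = Fintype.card β + 1) :
    ∀ v : V ⊕ V × β, ∀ A ∈ Part, setDist (corona G (⊤ : SimpleGraph β)) v A ≤ 3 := by
  rintro (i | ⟨i, u⟩) A hA
  · exact (hPart.setDist_inl_le_two hG hcard hA i).trans (Nat.le_succ 2)
  · calc
      setDist (corona G ⊤) (.inr (i, u)) A ≤ setDist (corona G ⊤) (.inl i) A + 1 :=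
        setDist_corona_inr_le hG (hPart.nonempty hA) i u
      _ ≤ 3 := Nat.succ_le_succ (hPart.setDist_inl_le_two hG hcard hA i)

/-- Let `G` be a connected graph. If `Part` is a resolving partition for `G⊙K_n`
of cardinality `n+1`, then for every vertex `v` of `G⊙K_n` and every `A ∈ Part`,
`d(v,A) ≤ 3`. -/
theorem stmt8 {V : Type*} [Fintype V] (G : SimpleGraph V) (hG : G.Connected) (n : ℕ)
    (Part : Set (Set (V ⊕ V × Fin n)))
    (hPart : IsResolvingPartition (corona G (⊤ : SimpleGraph (Fin n))) Part)
    (hcard : Part.ncard = n + 1) :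
    ∀ v : V ⊕ V × Fin n, ∀ A ∈ Part, setDist (corona G (⊤ : SimpleGraph (Fin n))) v A ≤ 3 :=
  stmt8_general G hG Part hPart (by rw [hcard, Fintype.card_fin])
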